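/- Let n ≥ 3 be an integer. If G is a connected simple graph on n vertices with dissociation number n−1 that attains the minimum spectral radius among all connected simple graphs on n vertices with dissociation number n−1, then G is isomorphic to S(0, (n−1)/2) when n is odd, and to S(1, (n−2)/2) when n is even. -/

import Mathlib

/-- `S` is a dissociation set of `G`: the subgraph induced by `S` has maximum degree ≤ 1. -/
def IsDissocSet {V : Type} (G : SimpleGraph V) (S : Set V) : Prop :=
  ∀ v ∈ S, ({u ∈ S | G.Adj v u}).ncard ≤ 1

/-- The dissociation number of `G`: the maximum cardinality of a dissociation set. -/
noncomputable def dissNum {V : Type} [Fintype V] (G : SimpleGraph V) : ℕ :=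
  sSup {k | ∃ S : Set V, IsDissocSet G S ∧ S.ncard = k}

open scoped Classical in
/-- The (real) adjacency matrix of a simple graph. -/
noncomputable def adjMat {V : Type} [Fintype V] (G : SimpleGraph V) : Matrix V V ℝ :=
  Matrix.of fun i j => if G.Adj i j then 1 else 0

/-- The spectral radius of a simple graph: the largest eigenvalue of its adjacency matrix. -/
noncomputable def specRad {V : Type} [Fintype V] (G : SimpleGraph V) : ℝ :=
  sSup {t : ℝ | ∃ v : V → ℝ, v ≠ 0 ∧ (adjMat G).mulVec v = t • v}

/-- `Sgraph r t` is the tree `S(r,t)`: a center vertex (`none`) with `r` pendant leaves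
and `t` pendant paths of length 2 attached to it. -/
def Sgraph (r t : ℕ) : SimpleGraph (Option (Fin r ⊕ Fin t × Fin 2)) :=
  SimpleGraph.fromRel (fun a b =>
    (a = none ∧ ∃ i : Fin r, b = some (Sum.inl i)) ∨
    (a = none ∧ ∃ j : Fin t, b = some (Sum.inr (j, 0))) ∨
    (∃ j : Fin t, a = some (Sum.inr (j, 0)) ∧ b = some (Sum.inr (j, 1))))

/-!
Deleting a suitable vertex `c` leaves a graph of maximum degree at most 1, so the connected graph
`G` consists of `l` leaves, `y` pendant paths of length 2 and `s / 2` triangles glued together at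
`c`. Solving the eigenvector equation away from `c` turns the equation at `c` into
`l / ρ + y * ρ / (ρ ^ 2 - 1) + s / (ρ - 1) = ρ`. A root `ρ > 1` has a positive eigenvector, so it is
the spectral radius; and by Rayleigh's principle the left side is at most `ρ` whenever `ρ > 1` is at
least the spectral radius. With `l + 2 * y + s` fixed, the left side strictly decreases when a
triangle is broken up into two leaves or, if `ρ ^ 2 > 2`, when two leaves are replaced by a pendant
path. Hence a minimiser has no triangles and at most one leaf, apart from the path on three
vertices, where `ρ ^ 2 = 2` and `c` may be either its middle vertex or an end.
-/

section Matrix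

open scoped Matrix

variable {ι : Type*} [Fintype ι]

open scoped MatrixOrder in
lemma dotProduct_mulVec_le_of_spectrum_le [DecidableEq ι] {A : Matrix ι ι ℝ}
    (hA : A.IsHermitian) {ρ : ℝ} (h : ∀ t ∈ spectrum ℝ A, t ≤ ρ) (w : ι → ℝ) :
    w ⬝ᵥ A *ᵥ w ≤ ρ * (w ⬝ᵥ w) := by
  have hle : A ≤ algebraMap ℝ _ ρ := le_algebraMap_of_spectrum_le h hA.isSelfAdjoint
  have hnonneg := (Matrix.le_iff.mp hle).dotProduct_mulVec_nonneg w
  simpa [Matrix.sub_mulVec, Algebra.algebraMap_eq_smul_one, Matrix.smul_mulVec] using hnonneg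

/-- Compare `v` with `w` at an index where `|v i| / w i` is largest. -/
lemma abs_le_of_mulVec_le_smul {A : Matrix ι ι ℝ} (hA : ∀ i j, 0 ≤ A i j) {w : ι → ℝ}
    (hw : ∀ i, 0 < w i) {ρ : ℝ} (hAw : A *ᵥ w ≤ ρ • w) {t : ℝ} {v : ι → ℝ} (hv : v ≠ 0)
    (ht : A *ᵥ v = t • v) : |t| ≤ ρ := by
  obtain ⟨k, hk⟩ := Function.ne_iff.mp hv
  have : Nonempty ι := ⟨k⟩
  obtain ⟨i, hi⟩ := Finite.exists_max fun i => |v i| / w i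
  set m := |v i| / w i with hm
  have hm_pos : 0 < m := (div_pos (abs_pos.mpr hk) (hw k)).trans_le (hi k)
  have hvi : |v i| = m * w i := (div_eq_iff (hw i).ne').mp hm.symm
  have hvw (j : ι) : |v j| ≤ m * w j := (div_le_iff₀ (hw j)).mp (hi j)
  have hti : |t| * (m * w i) ≤ ρ * (m * w i) :=
    calc |t| * (m * w i) = |(A *ᵥ v) i| := by simp [ht, abs_mul, hvi]
      _ ≤ ∑ j, |A i j * v j| := Finset.abs_sum_le_sum_abs _ _
      _ ≤ ∑ j, m * (A i j * w j) := by
          gcongr with j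
          rw [abs_mul, abs_of_nonneg (hA i j), mul_left_comm]
          exact mul_le_mul_of_nonneg_left (hvw j) (hA i j)
      _ = m * (A *ᵥ w) i := by simp [Matrix.mulVec, dotProduct, Finset.mul_sum]
      _ ≤ m * (ρ * w i) := mul_le_mul_of_nonneg_left (hAw i) hm_pos.le
      _ = ρ * (m * w i) := mul_left_comm _ _ _
  exact le_of_mul_le_mul_right hti (mul_pos hm_pos (hw i))

end Matrix

section SpectralRadius

open scoped Matrix

variable {V W : Type} [Fintype V] [Fintype W] {G : SimpleGraph V} {H : SimpleGraph W}

lemma adjMat_eq_adjMatrix (G : SimpleGraph V) [DecidableRel G.Adj] :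
    adjMat G = G.adjMatrix ℝ := by
  ext i j
  simp [adjMat, SimpleGraph.adjMatrix_apply]

lemma adjMat_eq_one {v u : V} (h : G.Adj v u) : adjMat G v u = 1 := by
  simp [adjMat, h]

lemma adjMat_eq_zero {v u : V} (h : ¬ G.Adj v u) : adjMat G v u = 0 := by
  simp [adjMat, h]

lemma adjMat_nonneg (G : SimpleGraph V) (v u : V) : 0 ≤ adjMat G v u := by
  by_cases h : G.Adj v u
  · simp [adjMat_eq_one h]
  · simp [adjMat_eq_zero h]

lemma isHermitian_adjMat (G : SimpleGraph V) : (adjMat G).IsHermitian := by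
  classical
  rw [adjMat_eq_adjMatrix]
  exact G.isSymm_adjMatrix

lemma specRad_eq_sSup_spectrum [DecidableEq V] (G : SimpleGraph V) :
    specRad G = sSup (spectrum ℝ (adjMat G)) := by
  unfold specRad
  congr 1
  ext t
  rw [← Matrix.spectrum_toLin', ← Module.End.hasEigenvalue_iff_mem_spectrum]
  constructor
  · rintro ⟨v, hv, h⟩
    exact Module.End.hasEigenvalue_of_hasEigenvector
      ⟨Module.End.mem_eigenspace_iff.mpr h, hv⟩
  · intro h
    obtain ⟨v, hv⟩ := h.exists_hasEigenvector
    exact ⟨v, hv.2, hv.apply_eq_smul⟩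

lemma dotProduct_adjMat_mulVec_le (G : SimpleGraph V) (w : V → ℝ) :
    w ⬝ᵥ adjMat G *ᵥ w ≤ specRad G * (w ⬝ᵥ w) := by
  classical
  refine dotProduct_mulVec_le_of_spectrum_le (isHermitian_adjMat G) (fun t ht => ?_) w
  rw [specRad_eq_sSup_spectrum]
  exact le_csSup (Matrix.finite_spectrum _).bddAbove ht

lemma specRad_congr (e : G ≃g H) : specRad G = specRad H := by
  classical
  have h : adjMat H = Matrix.reindexAlgEquiv ℝ ℝ e.toEquiv (adjMat G) := by
    rw [adjMat_eq_adjMatrix, adjMat_eq_adjMatrix]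
    exact (e.reindex_adjMatrix ℝ).symm
  rw [specRad_eq_sSup_spectrum, specRad_eq_sSup_spectrum, h, AlgEquiv.spectrum_eq]

lemma specRad_eq_of_pos_of_mulVec_eq_smul [Nonempty V] {w : V → ℝ} (hw : ∀ v, 0 < w v) {ρ : ℝ}
    (h : adjMat G *ᵥ w = ρ • w) : specRad G = ρ := by
  have hw0 : w ≠ 0 := fun h0 => (hw (Classical.arbitrary V)).ne' (congrFun h0 _)
  refine IsGreatest.csSup_eq ⟨⟨w, hw0, h⟩, ?_⟩
  rintro t ⟨v, hv, ht⟩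
  exact (le_abs_self t).trans (abs_le_of_mulVec_le_smul (adjMat_nonneg G) hw h.le hv ht)

/-- Rayleigh's principle: off `c` the eigenvector equation cancels the terms of the quotient. -/
lemma mulVec_le_of_specRad_le {c : V} {w : V → ℝ} {ρ : ℝ} (hc : 0 < w c)
    (hw : ∀ v ≠ c, (adjMat G *ᵥ w) v = ρ * w v) (h : specRad G ≤ ρ) :
    (adjMat G *ᵥ w) c ≤ ρ * w c := by
  have hsum : w ⬝ᵥ (adjMat G *ᵥ w - ρ • w) = w c * ((adjMat G *ᵥ w) c - ρ * w c) :=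
    Fintype.sum_eq_single c fun v hv => by simp [hw v hv]
  have hle : w ⬝ᵥ adjMat G *ᵥ w ≤ ρ * (w ⬝ᵥ w) :=
    (dotProduct_adjMat_mulVec_le G w).trans <|
      mul_le_mul_of_nonneg_right h (Finset.sum_nonneg fun v _ => mul_self_nonneg (w v))
  rw [dotProduct_sub, dotProduct_smul, smul_eq_mul] at hsum
  nlinarith

end SpectralRadius

section Dissociation

variable {V W : Type} {G : SimpleGraph V} {H : SimpleGraph W} {S : Set V}

lemma isDissocSet_iff [Finite V] : IsDissocSet G S ↔
    ∀ v ∈ S, ∀ u ∈ S, ∀ u' ∈ S, G.Adj v u → G.Adj v u' → u = u' := by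
  simp only [IsDissocSet, Set.ncard_le_one (Set.toFinite _), Set.mem_ofPred_eq]
  grind

lemma IsDissocSet.image (hS : IsDissocSet G S) (e : G ≃g H) : IsDissocSet H (e '' S) := by
  rintro _ ⟨v, hv, rfl⟩
  have himage : {u ∈ e '' S | H.Adj (e v) u} = e '' {u ∈ S | G.Adj v u} := by
    ext u
    simp only [Set.mem_image, Set.mem_ofPred_eq]
    grind [e.map_adj_iff]
  rw [himage, Set.ncard_image_of_injective _ e.injective]
  exact hS v hv

lemma bddAbove_ncard_isDissocSet [Finite V] (G : SimpleGraph V) :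
    BddAbove {k | ∃ S : Set V, IsDissocSet G S ∧ S.ncard = k} := by
  refine ⟨Nat.card V, ?_⟩
  rintro _ ⟨S, -, rfl⟩
  exact S.ncard_le_card

variable [Fintype V] [Fintype W]

lemma IsDissocSet.ncard_le_dissNum (hS : IsDissocSet G S) : S.ncard ≤ dissNum G :=
  le_csSup (bddAbove_ncard_isDissocSet G) ⟨S, hS, rfl⟩

lemma exists_isDissocSet_ncard_eq_dissNum (G : SimpleGraph V) :
    ∃ S : Set V, IsDissocSet G S ∧ S.ncard = dissNum G :=
  Nat.sSup_mem (s := {k | ∃ S : Set V, IsDissocSet G S ∧ S.ncard = k})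
    ⟨0, ∅, by simp [IsDissocSet], by simp⟩ (bddAbove_ncard_isDissocSet G)

lemma dissNum_le_of_iso (e : G ≃g H) : dissNum G ≤ dissNum H := by
  obtain ⟨S, hS, hcard⟩ := exists_isDissocSet_ncard_eq_dissNum G
  rw [← hcard, ← Set.ncard_image_of_injective S e.injective]
  exact (hS.image e).ncard_le_dissNum

lemma dissNum_congr (e : G ≃g H) : dissNum G = dissNum H :=
  (dissNum_le_of_iso e).antisymm (dissNum_le_of_iso e.symm)

lemma exists_isDissocSet_compl_singleton [Nonempty V]
    (h : dissNum G = Fintype.card V - 1) : ∃ c, IsDissocSet G {c}ᶜ := by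
  obtain ⟨S, hS, hcard⟩ := exists_isDissocSet_ncard_eq_dissNum G
  have hcompl : Sᶜ.ncard = 1 := by
    have := Fintype.card_pos (α := V)
    rw [Set.ncard_compl, Nat.card_eq_fintype_card]
    lia
  obtain ⟨c, hc⟩ := Set.ncard_eq_one.mp hcompl
  exact ⟨c, by rwa [← hc, compl_compl]⟩

lemma dissNum_eq_card_sub_one {c : V} (hc : IsDissocSet G {c}ᶜ)
    (huniv : ¬ IsDissocSet G Set.univ) : dissNum G = Fintype.card V - 1 := by
  apply le_antisymm
  · obtain ⟨S, hS, hcard⟩ := exists_isDissocSet_ncard_eq_dissNum G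
    have hne : S ≠ Set.univ := fun h => huniv (h ▸ hS)
    have := Set.ncard_lt_card hne
    rw [Nat.card_eq_fintype_card] at this
    lia
  · have := hc.ncard_le_dissNum
    rwa [Set.ncard_compl, Set.ncard_singleton, Nat.card_eq_fintype_card] at this

lemma le_specRad_of_forall_fin {n : ℕ} {ρ : ℝ}
    (h : ∀ H : SimpleGraph (Fin n), H.Connected → dissNum H = n - 1 → ρ ≤ specRad H)
    (hcard : Fintype.card V = n) (hG : G.Connected) (hdiss : dissNum G = n - 1) :
    ρ ≤ specRad G := by
  let i : G ≃g G.map (Fintype.equivFinOfCardEq hcard).toEmbedding := .map _ G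
  rw [specRad_congr i]
  exact h _ (i.connected_iff.mp hG) ((dissNum_congr i).symm.trans hdiss)

end Dissociation

section Mate

variable {V W : Type*} {G : SimpleGraph V} {H : SimpleGraph W} {c : V} {d : W}
  {p : V → V} {q : W → W}

/-- `p` is the mate map of `G` around the centre `c`: `G - c` has maximum degree at most 1, and `p`
swaps the ends of each edge of `G - c` and fixes every other vertex. -/
structure IsMate (G : SimpleGraph V) (c : V) (p : V → V) : Prop where
  map_center : p c = c
  involutive : Function.Involutive p
  adj_iff : ∀ {v u}, v ≠ c → u ≠ c → (G.Adj v u ↔ p v = u ∧ v ≠ u)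

lemma exists_involutive_adj_iff (hG : ∀ v u u', G.Adj v u → G.Adj v u' → u = u') :
    ∃ p : V → V, Function.Involutive p ∧ ∀ v u, G.Adj v u ↔ p v = u ∧ v ≠ u := by
  classical
  let p (v : V) : V := if h : ∃ u, G.Adj v u then h.choose else v
  have p_eq {v u : V} (h : G.Adj v u) : p v = u := by
    have hv : ∃ u, G.Adj v u := ⟨u, h⟩
    simpa only [p, dif_pos hv] using hG v _ u hv.choose_spec h
  have adj_or_fixed (v : V) : G.Adj v (p v) ∨ p v = v := by
    by_cases hv : ∃ u, G.Adj v u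
    · exact .inl (by simpa only [p, dif_pos hv] using hv.choose_spec)
    · exact .inr (dif_neg hv)
  refine ⟨p, fun v => ?_, fun v u => ⟨fun h => ⟨p_eq h, h.ne⟩, ?_⟩⟩
  · rcases adj_or_fixed v with h | h
    · exact p_eq h.symm
    · rw [h, h]
  · rintro ⟨rfl, hne⟩
    exact (adj_or_fixed v).resolve_right hne.symm

namespace IsMate

lemma map_ne_center (hp : IsMate G c p) {v : V} (hv : v ≠ c) : p v ≠ c :=
  fun h => hv (by rw [← hp.involutive v, h, hp.map_center])

lemma adj_map_iff (hp : IsMate G c p) {v : V} (hv : v ≠ c) : G.Adj v (p v) ↔ p v ≠ v := by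
  simp [hp.adj_iff hv (hp.map_ne_center hv), ne_comm]

lemma adj_center_or_adj_center_map (hp : IsMate G c p) (hG : G.Connected) {v : V} (hv : v ≠ c) :
    G.Adj c v ∨ G.Adj c (p v) := by
  obtain ⟨walk⟩ := hG.preconnected v c
  obtain ⟨⟨⟨a, b⟩, hab⟩, -, ha, hb⟩ := walk.exists_boundary_dart {v, p v} (by simp)
    (by simp [hv.symm, (hp.map_ne_center hv).symm])
  have hbc : b = c := by
    by_contra hbc
    have := hp.map_ne_center hv
    have := hp.involutive v
    have := hp.adj_iff (v := a) (u := b)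
    grind
  subst hbc
  rcases ha with rfl | rfl
  · exact .inl hab.symm
  · exact .inr hab.symm

lemma adj_iff_adj_of_equiv (hp : IsMate G c p) (hq : IsMate H d q) (e : W ≃ V) (hcenter : e d = c)
    (hmap : ∀ x, e (q x) = p (e x)) (hnbr : ∀ x, G.Adj c (e x) ↔ H.Adj d x) (x y : W) :
    G.Adj (e x) (e y) ↔ H.Adj x y := by
  subst hcenter
  by_cases hx : x = d
  · rw [hx, hnbr]
  by_cases hy : y = d
  · rw [hy, G.adj_comm, hnbr, H.adj_comm]
  rw [hp.adj_iff (e.injective.ne hx) (e.injective.ne hy), hq.adj_iff hx hy, ← hmap,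
    e.injective.eq_iff, e.injective.ne_iff]

end IsMate

end Mate

section MateOfIsDissocSet

variable {V : Type} [Finite V] {G : SimpleGraph V} {c : V} {p : V → V}

lemma IsDissocSet.exists_isMate (hc : IsDissocSet G {c}ᶜ) : ∃ p, IsMate G c p := by
  rw [isDissocSet_iff] at hc
  obtain ⟨p, hp, hadj⟩ := exists_involutive_adj_iff (G := G.deleteIncidenceSet c) <| by
    simp only [SimpleGraph.deleteIncidenceSet_adj]
    exact fun v u u' h h' => hc v h.2.1 u h.2.2 u' h'.2.2 h.1 h'.1
  simp only [SimpleGraph.deleteIncidenceSet_adj] at hadj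
  have map_center : p c = c := by
    by_contra h
    exact ((hadj c (p c)).mpr ⟨rfl, Ne.symm h⟩).2.1 rfl
  exact ⟨p, map_center, hp, by grind⟩

lemma IsMate.isDissocSet_compl_singleton (hp : IsMate G c p) : IsDissocSet G {c}ᶜ :=
  isDissocSet_iff.mpr fun _ hv _ hu _ hu' h h' =>
    ((hp.adj_iff hv hu).mp h).1.symm.trans ((hp.adj_iff hv hu').mp h').1

end MateOfIsDissocSet

section NeighborClasses

open Finset

variable {V : Type*} [Fintype V] {G : SimpleGraph V} {c : V} {p : V → V}

open scoped Classical in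
/-- For a mate map `p`, the pendant vertices at `c`. -/
noncomputable def leafNeighbors (G : SimpleGraph V) (c : V) (p : V → V) : Finset V :=
  {v | G.Adj c v ∧ p v = v}

open scoped Classical in
/-- For a mate map `p`, the inner vertices of the pendant paths of length 2 at `c`. -/
noncomputable def pathNeighbors (G : SimpleGraph V) (c : V) (p : V → V) : Finset V :=
  {v | G.Adj c v ∧ ¬ G.Adj c (p v)}

open scoped Classical in
/-- For a mate map `p`, the vertices other than `c` of the triangles through `c`. -/
noncomputable def triangleNeighbors (G : SimpleGraph V) (c : V) (p : V → V) : Finset V :=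
  {v | G.Adj c v ∧ G.Adj c (p v) ∧ p v ≠ v}

lemma mem_leafNeighbors {v : V} : v ∈ leafNeighbors G c p ↔ G.Adj c v ∧ p v = v := by
  simp [leafNeighbors]

lemma mem_pathNeighbors {v : V} : v ∈ pathNeighbors G c p ↔ G.Adj c v ∧ ¬ G.Adj c (p v) := by
  simp [pathNeighbors]

lemma mem_triangleNeighbors {v : V} :
    v ∈ triangleNeighbors G c p ↔ G.Adj c v ∧ G.Adj c (p v) ∧ p v ≠ v := by
  simp [triangleNeighbors]

lemma sum_adj_eq_sum_classes [DecidableRel G.Adj] {M : Type*} [AddCommMonoid M] (f : V → M) :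
    ∑ v with G.Adj c v, f v = ∑ v ∈ leafNeighbors G c p, f v +
      ∑ v ∈ pathNeighbors G c p, f v + ∑ v ∈ triangleNeighbors G c p, f v := by
  classical
  have hunion : ({v | G.Adj c v} : Finset V) =
      leafNeighbors G c p ∪ pathNeighbors G c p ∪ triangleNeighbors G c p := by
    ext v
    simp only [mem_filter, mem_univ, true_and, mem_union, mem_leafNeighbors, mem_pathNeighbors,
      mem_triangleNeighbors]
    grind
  have hdisj : Disjoint (leafNeighbors G c p) (pathNeighbors G c p) :=
    disjoint_left.mpr (by grind [mem_leafNeighbors, mem_pathNeighbors])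
  have hdisj' : Disjoint (leafNeighbors G c p ∪ pathNeighbors G c p) (triangleNeighbors G c p) :=
    disjoint_left.mpr (by grind [mem_leafNeighbors, mem_pathNeighbors, mem_triangleNeighbors])
  rw [hunion, sum_union hdisj', sum_union hdisj]

namespace IsMate

lemma card_eq_card_classes (hp : IsMate G c p) (hG : G.Connected) :
    Fintype.card V = #(leafNeighbors G c p) + 2 * #(pathNeighbors G c p) +
      #(triangleNeighbors G c p) + 1 := by
  classical
  have hnbr : #{v | G.Adj c v} = #(leafNeighbors G c p) + #(pathNeighbors G c p) +
      #(triangleNeighbors G c p) := by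
    simpa only [card_eq_sum_ones] using sum_adj_eq_sum_classes fun _ => 1
  have hcompl : ({v | ¬ G.Adj c v} : Finset V) =
      insert c ((pathNeighbors G c p).image p) := by
    ext v
    have := hp.adj_center_or_adj_center_map hG (v := v)
    have := hp.involutive v
    simp only [mem_filter, mem_univ, true_and, mem_insert, mem_image, mem_pathNeighbors]
    grind [hp.involutive, G.irrefl]
  have hcenter : c ∉ (pathNeighbors G c p).image p := by
    simp only [mem_image, mem_pathNeighbors, not_exists, not_and]
    rintro v ⟨hv, -⟩
    exact hp.map_ne_center hv.ne'
  have hcard := card_filter_add_card_filter_not (s := univ) (G.Adj c ·)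
  rw [hcompl, card_insert_of_notMem hcenter, card_image_of_injective _ hp.involutive.injective,
    hnbr, card_univ] at hcard
  lia

end IsMate

end NeighborClasses

section MateVector

open scoped Matrix
open Finset

variable {V : Type} [Fintype V] {G : SimpleGraph V} {c : V} {p : V → V} {ρ : ℝ}

open scoped Classical in
/-- The value `1` at the centre `c`, extended to `G - c` by the resolvent `(ρ - A(G - c))⁻¹` applied
to the indicator function of the neighbours of `c`; the mate map `p` makes the inverse explicit.
For `1 < ρ` the eigenvector equation for `ρ` then holds at every vertex except possibly `c`. -/
noncomputable def mateVector (G : SimpleGraph V) (c : V) (p : V → V) (ρ : ℝ) (v : V) : ℝ :=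
  if v = c then 1 else
    (ρ * adjMat G c v + adjMat G v (p v) * adjMat G c (p v)) / (ρ ^ 2 - adjMat G v (p v))

/-- The value of `A(G) * mateVector G c p ρ` at `c`; the equation `secularSum G c p ρ = ρ` says that
`mateVector G c p ρ` is an eigenvector. -/
noncomputable def secularSum (G : SimpleGraph V) (c : V) (p : V → V) (ρ : ℝ) : ℝ :=
  #(leafNeighbors G c p) / ρ + #(pathNeighbors G c p) * (ρ / (ρ ^ 2 - 1)) +
    #(triangleNeighbors G c p) / (ρ - 1)

lemma mateVector_center : mateVector G c p ρ c = 1 :=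
  if_pos rfl

namespace IsMate

lemma adjMat_mulVec_apply (hp : IsMate G c p) {v : V} (hv : v ≠ c) (f : V → ℝ) :
    (adjMat G *ᵥ f) v = adjMat G v c * f c + adjMat G v (p v) * f (p v) := by
  refine Fintype.sum_eq_add c (p v) (hp.map_ne_center hv).symm fun u hu => ?_
  have hadj : ¬ G.Adj v u := fun h => hu.2 ((hp.adj_iff hv hu.1).mp h).1.symm
  simp [adjMat_eq_zero hadj]

lemma adjMat_mulVec_mateVector (hp : IsMate G c p) (hρ : 1 < ρ) {v : V} (hv : v ≠ c) :
    (adjMat G *ᵥ mateVector G c p ρ) v = ρ * mateVector G c p ρ v := by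
  have hsymm (u u' : V) : adjMat G u u' = adjMat G u' u := (isHermitian_adjMat G).apply u' u
  rw [hp.adjMat_mulVec_apply hv, mateVector_center, mateVector, mateVector, if_neg hv,
    if_neg (hp.map_ne_center hv), hp.involutive v, hsymm (p v) v, hsymm v c]
  by_cases hadj : G.Adj v (p v)
  · have : ρ ^ 2 - 1 ≠ 0 := by nlinarith
    rw [adjMat_eq_one hadj]
    field_simp
    ring
  · have : ρ ≠ 0 := by positivity
    rw [adjMat_eq_zero hadj]
    field_simp
    ring

lemma adjMat_mulVec_mateVector_center (hp : IsMate G c p) (hρ : 1 < ρ) :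
    (adjMat G *ᵥ mateVector G c p ρ) c = secularSum G c p ρ := by
  classical
  have hleaf : ∀ v ∈ leafNeighbors G c p, mateVector G c p ρ v = 1 / ρ := by
    intro v hv
    obtain ⟨hcv, hpv⟩ := mem_leafNeighbors.mp hv
    have hloop : ¬ G.Adj v v := G.irrefl
    simp only [mateVector, if_neg hcv.ne', hpv, adjMat_eq_one hcv, adjMat_eq_zero hloop]
    field_simp
    ring
  have hpath : ∀ v ∈ pathNeighbors G c p, mateVector G c p ρ v = ρ / (ρ ^ 2 - 1) := by
    intro v hv
    obtain ⟨hcv, hcpv⟩ := mem_pathNeighbors.mp hv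
    have hadj : G.Adj v (p v) := (hp.adj_map_iff hcv.ne').mpr fun h => hcpv (by rwa [h])
    simp [mateVector, hcv.ne', adjMat_eq_one hcv, adjMat_eq_one hadj, adjMat_eq_zero hcpv]
  have htriangle : ∀ v ∈ triangleNeighbors G c p, mateVector G c p ρ v = 1 / (ρ - 1) := by
    intro v hv
    obtain ⟨hcv, hcpv, hpv⟩ := mem_triangleNeighbors.mp hv
    have hadj : G.Adj v (p v) := (hp.adj_map_iff hcv.ne').mpr hpv
    have hden : ρ ^ 2 - 1 ≠ 0 := by nlinarith
    have hden' : ρ - 1 ≠ 0 := by linarith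
    simp only [mateVector, if_neg hcv.ne', adjMat_eq_one hcv, adjMat_eq_one hcpv,
      adjMat_eq_one hadj]
    field_simp
    ring
  rw [adjMat_eq_adjMatrix, SimpleGraph.adjMatrix_mulVec_apply, SimpleGraph.neighborFinset_eq_filter,
    sum_adj_eq_sum_classes (p := p), sum_congr rfl hleaf, sum_congr rfl hpath,
    sum_congr rfl htriangle]
  simp [secularSum, div_eq_mul_inv]

lemma mateVector_pos (hp : IsMate G c p) (hG : G.Connected) (hρ : 1 < ρ) (v : V) :
    0 < mateVector G c p ρ v := by
  by_cases hv : v = c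
  · rw [hv, mateVector_center]
    exact one_pos
  rw [mateVector, if_neg hv]
  have hρ2 : 1 < ρ ^ 2 := one_lt_pow₀ hρ two_ne_zero
  apply div_pos
  · by_cases hcv : G.Adj c v
    · have := mul_nonneg (adjMat_nonneg G v (p v)) (adjMat_nonneg G c (p v))
      rw [adjMat_eq_one hcv]
      linarith
    · have hcpv := (hp.adj_center_or_adj_center_map hG hv).resolve_left hcv
      have hadj : G.Adj v (p v) := (hp.adj_map_iff hv).mpr fun h => hcv (by rwa [h] at hcpv)
      simp [adjMat_eq_zero hcv, adjMat_eq_one hcpv, adjMat_eq_one hadj]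
  · by_cases hadj : G.Adj v (p v)
    · rw [adjMat_eq_one hadj]
      linarith
    · rw [adjMat_eq_zero hadj]
      linarith

lemma specRad_eq_of_secularSum_eq (hp : IsMate G c p) (hG : G.Connected) (hρ : 1 < ρ)
    (h : secularSum G c p ρ = ρ) : specRad G = ρ := by
  have : Nonempty V := ⟨c⟩
  refine specRad_eq_of_pos_of_mulVec_eq_smul (hp.mateVector_pos hG hρ) ?_
  ext v
  by_cases hv : v = c
  · simp [hv, hp.adjMat_mulVec_mateVector_center hρ, mateVector_center, h]
  · exact hp.adjMat_mulVec_mateVector hρ hv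

lemma secularSum_le_of_specRad_le (hp : IsMate G c p) (hρ : 1 < ρ) (h : specRad G ≤ ρ) :
    secularSum G c p ρ ≤ ρ := by
  have hle := mulVec_le_of_specRad_le (by simp [mateVector_center])
    (fun v hv => hp.adjMat_mulVec_mateVector hρ hv) h
  rwa [hp.adjMat_mulVec_mateVector_center hρ, mateVector_center, mul_one] at hle

end IsMate

end MateVector

section Sgraph

open Finset

variable {r t : ℕ}

lemma sgraph_adj_none_inl (i : Fin r) : (Sgraph r t).Adj none (some (.inl i)) := by
  simp [Sgraph]

lemma sgraph_adj_none_inr {j : Fin t} {k : Fin 2} :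
    (Sgraph r t).Adj none (some (.inr (j, k))) ↔ k = 0 := by
  simp [Sgraph]

lemma sgraph_adj_inr_inr (j : Fin t) :
    (Sgraph r t).Adj (some (.inr (j, 0))) (some (.inr (j, 1))) := by
  simp [Sgraph]

lemma connected_sgraph (r t : ℕ) : (Sgraph r t).Connected := by
  refine (SimpleGraph.connected_iff_exists_forall_reachable _).mpr ⟨none, ?_⟩
  have hinner (j : Fin t) : (Sgraph r t).Reachable none (some (.inr (j, 0))) :=
    (sgraph_adj_none_inr.mpr rfl).reachable
  rintro (_ | i | ⟨j, k⟩)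
  · rfl
  · exact (sgraph_adj_none_inl i).reachable
  · fin_cases k
    · exact hinner j
    · exact (hinner j).trans (sgraph_adj_inr_inr j).reachable

lemma card_sgraph (r t : ℕ) :
    Fintype.card (Option (Fin r ⊕ Fin t × Fin 2)) = r + 2 * t + 1 := by
  simp [mul_comm]

/-- The mate map of `Sgraph r t` around its centre `none`: it swaps the two vertices of each pendant
path and fixes the leaves. -/
def sgraphMate (r t : ℕ) :
    Option (Fin r ⊕ Fin t × Fin 2) → Option (Fin r ⊕ Fin t × Fin 2) :=
  Option.map (Sum.map id (Prod.map id Fin.rev))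

lemma isMate_sgraphMate (r t : ℕ) : IsMate (Sgraph r t) none (sgraphMate r t) where
  map_center := rfl
  involutive := by
    rintro (_ | i | ⟨j, k⟩) <;> simp [sgraphMate]
  adj_iff := by
    rintro (_ | i | ⟨j, k⟩) (_ | i' | ⟨j', k'⟩) hv hu
    case some.inr.some.inr => fin_cases k <;> fin_cases k' <;> simp [Sgraph, sgraphMate, eq_comm]
    all_goals simp_all [Sgraph, sgraphMate]

lemma dissNum_sgraph (ht : 1 ≤ t) : dissNum (Sgraph r t) = r + 2 * t := by
  have huniv : ¬ IsDissocSet (Sgraph r t) Set.univ := fun h => by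
    let j : Fin t := ⟨0, ht⟩
    have := isDissocSet_iff.mp h (some (.inr (j, 0))) trivial none trivial (some (.inr (j, 1)))
      trivial (sgraph_adj_none_inr.mpr rfl).symm (sgraph_adj_inr_inr j)
    contradiction
  rw [dissNum_eq_card_sub_one (isMate_sgraphMate r t).isDissocSet_compl_singleton huniv,
    card_sgraph, Nat.add_sub_cancel]

lemma leafNeighbors_sgraph (r t : ℕ) : leafNeighbors (Sgraph r t) none (sgraphMate r t) =
    univ.map (Function.Embedding.inl.trans .some) := by
  ext (_ | i | ⟨j, k⟩)
  · simp [mem_leafNeighbors]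
  · simp [mem_leafNeighbors, sgraph_adj_none_inl, sgraphMate]
  · fin_cases k <;> simp [mem_leafNeighbors, sgraphMate]

lemma triangleNeighbors_sgraph (r t : ℕ) :
    triangleNeighbors (Sgraph r t) none (sgraphMate r t) = ∅ := by
  ext (_ | i | ⟨j, k⟩)
  · simp [mem_triangleNeighbors]
  · simp [mem_triangleNeighbors, sgraphMate]
  · fin_cases k <;> simp [mem_triangleNeighbors, sgraph_adj_none_inr, sgraphMate]

lemma secularSum_sgraph (r t : ℕ) (ρ : ℝ) :
    secularSum (Sgraph r t) none (sgraphMate r t) ρ = r / ρ + t * (ρ / (ρ ^ 2 - 1)) := by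
  have hleaf : #(leafNeighbors (Sgraph r t) none (sgraphMate r t)) = r := by
    simp [leafNeighbors_sgraph]
  have hpath : #(pathNeighbors (Sgraph r t) none (sgraphMate r t)) = t := by
    have := (isMate_sgraphMate r t).card_eq_card_classes (connected_sgraph r t)
    rw [card_sgraph, hleaf, triangleNeighbors_sgraph, card_empty] at this
    lia
  simp [secularSum, hleaf, hpath, triangleNeighbors_sgraph]

lemma exists_secular_root (r : ℕ) (ht : 1 ≤ t) :
    ∃ ρ : ℝ, 1 < ρ ∧ 2 ≤ ρ ^ 2 ∧ r / ρ + t * (ρ / (ρ ^ 2 - 1)) = ρ := by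
  have ht' : (1 : ℝ) ≤ t := by exact_mod_cast ht
  -- In terms of `x = ρ ^ 2` the equation is `(x - r) * (x - 1) = t * x`.
  obtain ⟨x, ⟨hx, -⟩, hroot⟩ :=
    intermediate_value_Icc (a := (2 : ℝ)) (b := r + t + 1) (by linarith)
      (f := fun x => (x - r) * (x - 1) - t * x) (by fun_prop)
      (show (0 : ℝ) ∈ _ from ⟨by linarith, by ring_nf; positivity⟩)
  have hρ : √x ^ 2 = x := Real.sq_sqrt (by linarith)
  have hρ1 : 1 < √x := Real.lt_sqrt_of_sq_lt (by linarith)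
  refine ⟨√x, hρ1, by rwa [hρ], ?_⟩
  have hden : √x ^ 2 - 1 ≠ 0 := by linarith
  field_simp
  rw [hρ]
  linarith

lemma specRad_sgraph (r : ℕ) (ht : 1 ≤ t) :
    1 < specRad (Sgraph r t) ∧ 2 ≤ specRad (Sgraph r t) ^ 2 ∧
      r / specRad (Sgraph r t) + t * (specRad (Sgraph r t) / (specRad (Sgraph r t) ^ 2 - 1)) =
        specRad (Sgraph r t) := by
  obtain ⟨ρ, h1, h2, heq⟩ := exists_secular_root r ht
  rw [(isMate_sgraphMate r t).specRad_eq_of_secularSum_eq (connected_sgraph r t) h1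
    (by rwa [secularSum_sgraph])]
  exact ⟨h1, h2, heq⟩

lemma nonempty_iso_sgraph_two_zero_sgraph_zero_one : Nonempty (Sgraph 2 0 ≃g Sgraph 0 1) := by
  let f : Option (Fin 2 ⊕ Fin 0 × Fin 2) → Option (Fin 0 ⊕ Fin 1 × Fin 2)
    | none => some (.inr (0, 0))
    | some (.inl i) => if i = 0 then none else some (.inr (0, 1))
    | some (.inr (j, _)) => j.elim0
  have hf : f.Bijective := by decide
  refine ⟨⟨Equiv.ofBijective f hf, ?_⟩⟩
  rintro (_ | i | ⟨j, _⟩) (_ | i' | ⟨j', _⟩)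
  case none.none => simp
  case none.some.inl => fin_cases i' <;> simp [f, Sgraph]
  case some.inl.none => fin_cases i <;> simp [f, Sgraph]
  case some.inl.some.inl => fin_cases i <;> fin_cases i' <;> simp [f, Sgraph]
  all_goals first | exact j.elim0 | exact j'.elim0

end Sgraph

section SgraphMap

open Finset

variable {V : Type*} [Fintype V] {G : SimpleGraph V} {c : V} {p : V → V}

/-- The vertex map from `Sgraph l y` that sends the centre to `c`, the leaves to the `a i`, and the
two vertices of the `j`-th pendant path to `b j` and its mate. -/
def sgraphMap {l y : ℕ} (c : V) (p : V → V) (a : Fin l → V) (b : Fin y → V) :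
    Option (Fin l ⊕ Fin y × Fin 2) → V
  | none => c
  | some (.inl i) => a i
  | some (.inr (j, k)) => if k = 0 then b j else p (b j)

namespace IsMate

lemma surjective_sgraphMap {l y : ℕ} {a : Fin l → V} {b : Fin y → V} (hp : IsMate G c p)
    (hG : G.Connected) (htriangle : triangleNeighbors G c p = ∅)
    (ha : ∀ v ∈ leafNeighbors G c p, ∃ i, a i = v)
    (hb : ∀ v ∈ pathNeighbors G c p, ∃ j, b j = v) :
    (sgraphMap c p a b).Surjective := by
  have of_adj {v : V} (hv : G.Adj c v) :
      (∃ x, sgraphMap c p a b x = v) ∧ ∃ x, sgraphMap c p a b x = p v := by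
    by_cases hpv : G.Adj c (p v)
    · have hfix : p v = v := by
        by_contra hne
        exact notMem_empty v (htriangle ▸ mem_triangleNeighbors.mpr ⟨hv, hpv, hne⟩)
      obtain ⟨i, rfl⟩ := ha v (mem_leafNeighbors.mpr ⟨hv, hfix⟩)
      exact ⟨⟨some (.inl i), rfl⟩, ⟨some (.inl i), hfix.symm⟩⟩
    · obtain ⟨j, rfl⟩ := hb v (mem_pathNeighbors.mpr ⟨hv, hpv⟩)
      exact ⟨⟨some (.inr (j, 0)), rfl⟩, ⟨some (.inr (j, 1)), rfl⟩⟩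
  intro v
  by_cases hvc : v = c
  · exact ⟨none, hvc.symm⟩
  · rcases hp.adj_center_or_adj_center_map hG hvc with hv | hv
    · exact (of_adj hv).1
    · simpa only [hp.involutive v] using (of_adj hv).2

lemma nonempty_iso_sgraph (hp : IsMate G c p) (hG : G.Connected)
    (htriangle : triangleNeighbors G c p = ∅) :
    Nonempty (G ≃g Sgraph #(leafNeighbors G c p) #(pathNeighbors G c p)) := by
  let a := (leafNeighbors G c p).equivFin.symm
  let b := (pathNeighbors G c p).equivFin.symm
  let f := sgraphMap c p (fun i => a i) (fun j => b j)
  have hleaf (i) := mem_leafNeighbors.mp (a i).2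
  have hpath (j) := mem_pathNeighbors.mp (b j).2
  have hsurj : f.Surjective := hp.surjective_sgraphMap hG htriangle
    (fun v hv => ⟨a.symm ⟨v, hv⟩, by simp⟩) (fun v hv => ⟨b.symm ⟨v, hv⟩, by simp⟩)
  have hbij : f.Bijective := (Fintype.bijective_iff_surjective_and_card f).mpr
    ⟨hsurj, by rw [card_sgraph, hp.card_eq_card_classes hG, htriangle, card_empty, add_zero]⟩
  have hmap x : f (sgraphMate _ _ x) = p (f x) := by
    rcases x with _ | i | ⟨j, k⟩
    · exact hp.map_center.symm
    · exact (hleaf i).2.symm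
    · fin_cases k <;> simp [f, sgraphMap, sgraphMate, hp.involutive _]
  have hnbr x : G.Adj c (f x) ↔ (Sgraph _ _).Adj none x := by
    rcases x with _ | i | ⟨j, k⟩
    · simp [f, sgraphMap]
    · simp [f, sgraphMap, sgraph_adj_none_inl, hleaf i]
    · fin_cases k <;> simp [f, sgraphMap, sgraph_adj_none_inr, hpath j]
  exact ⟨RelIso.symm ⟨.ofBijective f hbij, fun {x y} =>
    hp.adj_iff_adj_of_equiv (isMate_sgraphMate _ _) _ rfl hmap hnbr x y⟩⟩

end IsMate

end SgraphMap

section Comparison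

open Finset

/-- Replacing two leaves by a pendant path lowers the secular sum by
`(ρ ^ 2 - 2) / (ρ * (ρ ^ 2 - 1))`; replacing a triangle by two leaves lowers it by
`2 / (ρ * (ρ - 1))`. -/
lemma eq_zero_and_eq_or_sq_eq_two_of_secular_le {ρ l y s r t : ℝ} (hρ : 1 < ρ) (hρ2 : 2 ≤ ρ ^ 2)
    (hcount : l + 2 * y + s = r + 2 * t) (hr : r ≤ l + s) (hs : 0 ≤ s)
    (hle : l / ρ + y * (ρ / (ρ ^ 2 - 1)) + s / (ρ - 1) ≤ r / ρ + t * (ρ / (ρ ^ 2 - 1))) :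
    s = 0 ∧ (l = r ∨ ρ ^ 2 = 2) := by
  have hden : 0 < ρ - 1 := by linarith
  have hden2 : 0 < ρ ^ 2 - 1 := by linarith
  have : 0 ≤ ρ ^ 2 - 2 := by linarith
  have : 0 ≤ l + s - r := by linarith
  have hdiff : l / ρ + y * (ρ / (ρ ^ 2 - 1)) + s / (ρ - 1) - (r / ρ + t * (ρ / (ρ ^ 2 - 1))) =
      (l + s - r) * ((ρ ^ 2 - 2) / (2 * ρ * (ρ ^ 2 - 1))) + s * (1 / (ρ * (ρ - 1))) := by
    have hy : y = (r + 2 * t - l - s) / 2 := by linarith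
    rw [hy]
    have := hden.ne'
    have := hden2.ne'
    field_simp
    ring
  have hleaf : 0 ≤ (l + s - r) * ((ρ ^ 2 - 2) / (2 * ρ * (ρ ^ 2 - 1))) := by positivity
  have htriangle : 0 ≤ s * (1 / (ρ * (ρ - 1))) := by positivity
  have hs0 : s = 0 := by
    have : s * (1 / (ρ * (ρ - 1))) = 0 := by linarith
    exact (mul_eq_zero.mp this).resolve_right (by positivity)
  refine ⟨hs0, ?_⟩
  have : (l + s - r) * ((ρ ^ 2 - 2) / (2 * ρ * (ρ ^ 2 - 1))) = 0 := by linarith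
  rcases mul_eq_zero.mp this with h | h
  · left
    linarith
  · right
    rw [div_eq_zero_iff, or_iff_left (by positivity)] at h
    linarith

theorem nonempty_iso_sgraph_of_specRad_le {V : Type} [Fintype V] {G : SimpleGraph V} {c : V}
    {r t : ℕ} (hG : G.Connected) (hc : IsDissocSet G {c}ᶜ)
    (hr : r ≤ 1) (ht : 1 ≤ t) (hcard : Fintype.card V = r + 2 * t + 1)
    (hle : specRad G ≤ specRad (Sgraph r t)) : Nonempty (G ≃g Sgraph r t) := by
  obtain ⟨p, hp⟩ := hc.exists_isMate
  obtain ⟨hρ, hρ2, hsecular⟩ := specRad_sgraph r ht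
  set ρ := specRad (Sgraph r t)
  have hcount := hp.card_eq_card_classes hG
  rw [hcard] at hcount
  have hle' := (hp.secularSum_le_of_specRad_le hρ hle).trans_eq hsecular.symm
  have hcount' : (#(leafNeighbors G c p) + 2 * #(pathNeighbors G c p) +
      #(triangleNeighbors G c p) : ℝ) = r + 2 * t := by exact_mod_cast (by lia)
  -- Both sides have the same parity and `r ≤ 1`.
  have hparity : (r : ℝ) ≤ #(leafNeighbors G c p) + #(triangleNeighbors G c p) := by
    exact_mod_cast (by lia)
  obtain ⟨hs, hl⟩ := eq_zero_and_eq_or_sq_eq_two_of_secular_le hρ hρ2 hcount' hparity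
    (Nat.cast_nonneg _) hle'
  rw [Nat.cast_eq_zero] at hs
  obtain ⟨e⟩ := hp.nonempty_iso_sgraph hG (card_eq_zero.mp hs)
  have hl' : #(leafNeighbors G c p) = r ∨ #(leafNeighbors G c p) = 2 ∧ r = 0 ∧ t = 1 := by
    rcases hl with hl | hρ2
    · exact .inl (Nat.cast_inj.mp hl)
    · have : (r : ℝ) + 2 * t = 2 := by
        rw [hρ2] at hsecular
        field_simp at hsecular
        linear_combination hsecular + (1 - (t : ℝ)) * hρ2
      have : r + 2 * t = 2 := by exact_mod_cast this
      lia
  rcases hl' with hl' | ⟨hl', rfl, rfl⟩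
  · have hy : #(pathNeighbors G c p) = t := by lia
    rw [hl', hy] at e
    exact ⟨e⟩
  · have hy : #(pathNeighbors G c p) = 0 := by lia
    rw [hl', hy] at e
    exact nonempty_iso_sgraph_two_zero_sgraph_zero_one.map e.trans

end Comparison

/-- If a connected graph `G` of order `n ≥ 3` with dissociation number `n-1` attains the
minimum spectral radius among all connected graphs of order `n` with dissociation number
`n-1`, then `G ≅ S(0,(n-1)/2)` when `n` is odd and `G ≅ S(1,(n-2)/2)` when `n` is even. -/
theorem minimum_spectral_radius_diss_eq_card_sub_one
    {n : ℕ} (hn : 3 ≤ n) {V : Type} [Fintype V] (G : SimpleGraph V)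
    (hcard : Fintype.card V = n) (hconn : G.Connected) (hdiss : dissNum G = n - 1)
    (hmin : ∀ H : SimpleGraph (Fin n), H.Connected → dissNum H = n - 1 →
      specRad G ≤ specRad H) :
    (Odd n → Nonempty (G ≃g Sgraph 0 ((n - 1) / 2))) ∧
    (Even n → Nonempty (G ≃g Sgraph 1 ((n - 2) / 2))) := by
  have : Nonempty V := hconn.nonempty
  obtain ⟨c, hc⟩ := exists_isDissocSet_compl_singleton (hdiss.trans (by rw [hcard]))
  have iso_sgraph {r t : ℕ} (hr : r ≤ 1) (ht : 1 ≤ t) (hrt : n = r + 2 * t + 1) :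
      Nonempty (G ≃g Sgraph r t) := by
    have hle : specRad G ≤ specRad (Sgraph r t) :=
      le_specRad_of_forall_fin hmin ((card_sgraph r t).trans hrt.symm) (connected_sgraph r t)
        (by rw [dissNum_sgraph ht, hrt, Nat.add_sub_cancel])
    exact nonempty_iso_sgraph_of_specRad_le hconn hc hr ht (hcard.trans hrt) hle
  refine ⟨fun hodd => iso_sgraph zero_le_one ?_ ?_, fun heven => iso_sgraph le_rfl ?_ ?_⟩
  all_goals grind
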